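/- For every integer t ≥ 4: w_4^{2^{t-1}-1} ∈ I_{2^t-1,4} and w_4^{2^{t-1}-2} ∉ I_{2^t-1,4}; that is, the image of w_4 in F_2[w_2,w_3,w_4]/I_{2^t-1,4} has height exactly 2^{t-1}-2. (This expresses that the height of the Stiefel–Whitney class w̃_4 in H^*(G̃_{2^t-1,4}; F_2) equals 2^{t-1}-2.) -/

import Mathlib

open MvPolynomial

/-- The polynomials `g_r = g_r^{(4)}` in `F_2[w_2,w_3,w_4]` (variables `X 0 = w_2`,
`X 1 = w_3`, `X 2 = w_4`): `g_0 = 1`, `g_r = 0` for `r < 0`, and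
`g_r = w_2·g_{r-2} + w_3·g_{r-3} + w_4·g_{r-4}` for `r ≥ 1`. -/
noncomputable def g4 : ℤ → MvPolynomial (Fin 3) (ZMod 2)
  | r =>
    if r ≤ 0 then (if r = 0 then 1 else 0)
    else X 0 * g4 (r - 2) + X 1 * g4 (r - 3) + X 2 * g4 (r - 4)
  termination_by r => r.toNat
  decreasing_by all_goals omega

/-- The ideal `I_{n,4} = (g_{n-3}, g_{n-2}, g_{n-1}, g_n)` of `F_2[w_2,w_3,w_4]`. -/
noncomputable def I4 (n : ℤ) : Ideal (MvPolynomial (Fin 3) (ZMod 2)) :=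
  Ideal.span {g4 (n - 3), g4 (n - 2), g4 (n - 1), g4 n}

/-!
Put `a = g_{2^n-4}`, `b = g_{2^n-2}`, `c = g_{2^n-1}`. Since `g_{2^n-3} = 0`, these generate
`I_n := I_{2^n-1,4}`, and passing from `n` to `n + 1` replaces them by
`b² + w₄ a²`, `c² + w₂ b²`, `w₃ b²`. So `I_{n+1}` arises from the Frobenius power
`I_n^[2] = (a², b², c²)` by a matrix of determinant `± w₃ w₄`, whence
`w₃ w₄ x ∈ I_{n+1} ↔ x ∈ I_n^[2]`: one direction is Cramer's rule, the other holds because `w₃` and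
`w₄` are regular modulo the relevant pairs of generators.

Membership: with `a` and `b` taken at level `n + 1`, one has `w₄^(2^n-1) = w₂ a b + (b² + w₄ a²)`
modulo `w₃`, and Cramer's rule shows that the error term stays in `w₃ I_{n+1}` along the induction.

Non-membership: squarefree monomials are part of a basis of the polynomial ring over its squares, so
`w₂ w₃ w₄ f² ∈ I_n^[2]` forces `f ∈ I_n`. Hence `f ∉ I_n` implies `w₂ w₃² w₄² f² ∉ I_{n+1}`;
starting from `w₄² ∉ I_3`, this produces for every `n ≥ 3` a multiple of `w₄^(2^(n-1)-2)` outside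
`I_n`.
-/

open Ideal

section Regularity

variable {R : Type*} [CommRing R]

theorem exists_eq_mul_of_mul_add_mul_eq_zero [IsDomain R] [DecompositionMonoid R] {q r u v : R}
    (hqr : IsRelPrime q r) (h : u * q + v * r = 0) :
    ∃ k, u = k * r ∧ v = -k * q := by
  obtain rfl | hq := eq_or_ne q 0
  · obtain ⟨r, rfl⟩ := isRelPrime_zero_left.1 hqr
    exact ⟨u * ↑r⁻¹, by simp, by simpa using h⟩
  obtain ⟨k, rfl⟩ : q ∣ v := hqr.dvd_of_dvd_mul_right ⟨-u, by linear_combination h⟩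
  exact ⟨-k, mul_right_cancel₀ hq (by linear_combination h), by ring⟩

theorem mem_span_insert_of_mul_mem_span_insert_mul {s : Set R} {w f x : R}
    (hw : IsSMulRegular (R ⧸ span s) w) (h : w * x ∈ span (insert (w * f) s)) :
    x ∈ span (insert f s) := by
  obtain ⟨k, z, hz, hx⟩ := mem_span_insert.1 h
  have hxk : x - k * f ∈ span s :=
    mem_of_isSMulRegular_quotient_of_smul_mem hw (by
      rwa [smul_eq_mul, show w * (x - k * f) = z by linear_combination hx])
  exact mem_span_insert.2 ⟨k, _, hxk, by ring⟩

variable {a b c u v w x : R}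

theorem mul_mul_mem_span_of_mem_span (hx : x ∈ span {a, b, c}) :
    v * w * x ∈ span {b + w * a, c + u * b, v * b} := by
  obtain ⟨i, j, k, rfl⟩ := Submodule.mem_span_triple.1 hx
  exact Submodule.mem_span_triple.2
    ⟨v * i, v * w * k, w * j - i - u * w * k, by simp only [smul_eq_mul]; ring⟩

theorem mem_span_of_mul_mul_mem_span
    (hv : IsSMulRegular (R ⧸ span {b + w * a, c + u * b}) v)
    (hw : IsSMulRegular (R ⧸ span {b, c}) w)
    (hx : v * w * x ∈ span {b + w * a, c + u * b, v * b}) : x ∈ span {a, b, c} := by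
  have hwx : w * x ∈ span {b, b + w * a, c + u * b} := by
    refine mem_span_insert_of_mul_mem_span_insert_mul hv ?_
    rwa [← mul_assoc, show ({v * b, b + w * a, c + u * b} : Set R) =
      {b + w * a, c + u * b, v * b} by grind]
  refine mem_span_insert_of_mul_mem_span_insert_mul hw ?_
  obtain ⟨i, j, k, h⟩ := Submodule.mem_span_triple.1 hwx
  refine Submodule.mem_span_triple.2 ⟨j, i + j + u * k, k, ?_⟩
  simp only [smul_eq_mul] at h ⊢
  linear_combination h

end Regularity

theorem coeff_one_aeval_X_pow {σ R : Type*} [CommSemiring R] {d : σ → ℕ} (hd : ∀ i, 2 ≤ d i)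
    (f : MvPolynomial σ R) :
    (aeval (fun i ↦ (Polynomial.X : Polynomial R) ^ d i) f).coeff 1 = 0 := by
  induction f using MvPolynomial.induction_on with
  | C r => simp
  | add p q hp hq => simp [hp, hq]
  | mul_X p i =>
    rw [map_mul, aeval_X, Polynomial.coeff_mul_X_pow', if_neg (by have := hd i; omega)]

section KillVar

variable {σ k : Type*} [CommRing k]

theorem isRelPrime_X_X [IsDomain k] {i j : σ} (hij : i ≠ j) :
    IsRelPrime (X i : MvPolynomial σ k) (X j) :=
  X_prime.irreducible.isRelPrime_iff_not_dvd.2 (X_dvd_X.not.2 hij)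

variable [DecidableEq σ]

/-- The substitution `X i ↦ 0`, as an endomorphism of the polynomial ring rather than as the
quotient map by `X i`; this way `f` and `killVar i f` can be compared directly. -/
noncomputable def killVar (i : σ) : MvPolynomial σ k →ₐ[k] MvPolynomial σ k :=
  aeval (Function.update X i 0)

theorem killVar_X_self (i : σ) : killVar i (X i : MvPolynomial σ k) = 0 := by
  simp [killVar]

theorem killVar_X_of_ne {i j : σ} (h : j ≠ i) : killVar i (X j : MvPolynomial σ k) = X j := by
  simp [killVar, h]

theorem X_dvd_sub_killVar (i : σ) (f : MvPolynomial σ k) : X i ∣ f - killVar i f := by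
  have hcomp : (Quotient.mkₐ k (span {X i})).comp (killVar i) = Quotient.mkₐ k (span {X i}) := by
    ext j
    obtain rfl | hj := eq_or_ne j i
    · simp [killVar_X_self]
    · simp [killVar_X_of_ne hj]
  rw [← mem_span_singleton, ← Quotient.mk_eq_mk_iff_sub_mem]
  exact (DFunLike.congr_fun hcomp f).symm

theorem isSMulRegular_X_quotient_span_pair [IsDomain k] [UniqueFactorizationMonoid k] {i : σ}
    {q r : MvPolynomial σ k} (hqr : IsRelPrime (killVar i q) (killVar i r)) :
    IsSMulRegular (MvPolynomial σ k ⧸ span {q, r}) (X i : MvPolynomial σ k) := by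
  refine (isSMulRegular_quotient_iff_mem_of_smul_mem _ _).2 fun x hx ↦ ?_
  obtain ⟨u, v, h⟩ := mem_span_pair.1 hx
  have hsyz : killVar i u * killVar i q + killVar i v * killVar i r = 0 := by
    simpa [killVar_X_self] using congrArg (killVar i) h
  obtain ⟨l, hu, hv⟩ := exists_eq_mul_of_mul_add_mul_eq_zero hqr hsyz
  obtain ⟨u', hu'⟩ := X_dvd_sub_killVar i u
  obtain ⟨v', hv'⟩ := X_dvd_sub_killVar i v
  obtain ⟨q', hq'⟩ := X_dvd_sub_killVar i q
  obtain ⟨r', hr'⟩ := X_dvd_sub_killVar i r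
  refine mem_span_pair.2 ⟨u' - l * r', v' + l * q', mul_left_cancel₀ (X_ne_zero i) ?_⟩
  rw [smul_eq_mul] at h
  linear_combination h - q * (hu' + hu - l * hr') - r * (hv' + hv + l * hq')

end KillVar

section ExpandCoeff

variable {σ R : Type*} [CommSemiring R] (n : ℕ) [NeZero n] (e : σ →₀ ℕ)

theorem injective_nsmul_add : Function.Injective fun m : σ →₀ ℕ ↦ n • m + e :=
  (add_left_injective e).comp (nsmul_right_injective (NeZero.ne n))

/-- The `R`-linear operator on polynomials extracting the coefficients at the exponents congruent
to `e` modulo `n`: the coefficient of `m` in `expandCoeff n e f` is that of `n • m + e` in `f`.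
When all `e i < n` it is a left inverse of `f ↦ monomial e 1 * expand n f` and is linear over the
image of `expand n`. -/
noncomputable def expandCoeff : MvPolynomial σ R →ₗ[R] MvPolynomial σ R :=
  (basisMonomials σ R).repr.symm.toLinearMap ∘ₗ
    Finsupp.lcomapDomain _ (injective_nsmul_add n e) ∘ₗ
      (basisMonomials σ R).repr.toLinearMap

variable {n e}

theorem coeff_expandCoeff (m : σ →₀ ℕ) (f : MvPolynomial σ R) :
    coeff m (expandCoeff n e f) = coeff (n • m + e) f :=
  rfl

theorem expandCoeff_mul_expand (he : ∀ i, e i < n) (f g : MvPolynomial σ R) :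
    expandCoeff n e (f * expand n g) = expandCoeff n e f * g := by
  induction g using MvPolynomial.induction_on' with
  | monomial d r =>
    ext m
    have hle : n • d ≤ n • m + e ↔ d ≤ m := by
      refine forall_congr' fun i ↦ ⟨fun h ↦ ?_, fun h ↦ ?_⟩
      · have : n * d i < n * (m i + 1) := by simpa [mul_add] using h.trans_lt (by simpa using he i)
        exact Nat.lt_succ_iff.1 (Nat.lt_of_mul_lt_mul_left this)
      · simpa using Nat.le_add_right_of_le (Nat.mul_le_mul_left n h)
    have hsub (h : d ≤ m) : n • m + e - n • d = n • (m - d) + e := by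
      obtain ⟨m, rfl⟩ := exists_add_of_le h
      rw [nsmul_add, add_assoc, add_tsub_cancel_left, add_tsub_cancel_left]
    simp only [expand_monomial, coeff_expandCoeff, coeff_mul_monomial', hle]
    split_ifs with h
    · rw [hsub h]
    · rfl
  | add p q hp hq => rw [map_add, mul_add, map_add, hp, hq, mul_add]

theorem expandCoeff_monomial_self : expandCoeff n e (monomial e (1 : R)) = 1 := by
  classical
  ext m
  rw [coeff_expandCoeff, coeff_monomial, coeff_one]
  simp [eq_comm, NeZero.ne n]

theorem expandCoeff_mem_of_mem_map_expand (he : ∀ i, e i < n) {I : Ideal (MvPolynomial σ R)}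
    {f : MvPolynomial σ R} (hf : f ∈ I.map (expand n)) : expandCoeff n e f ∈ I := by
  suffices h : ∀ g, expandCoeff n e (g * f) ∈ I by simpa using h 1
  induction hf using Submodule.span_induction with
  | mem f hf =>
    obtain ⟨f, hf, rfl⟩ := hf
    exact fun g ↦ expandCoeff_mul_expand he g f ▸ I.mul_mem_left _ hf
  | zero => simp
  | add f f' _ _ hf hf' => exact fun g ↦ by simpa [mul_add] using I.add_mem (hf g) (hf' g)
  | smul h f _ hf => exact fun g ↦ by simpa [mul_assoc] using hf (g * h)

theorem mem_of_monomial_mul_expand_mem_map_expand (he : ∀ i, e i < n)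
    {I : Ideal (MvPolynomial σ R)} {f : MvPolynomial σ R}
    (hf : monomial e 1 * expand n f ∈ I.map (expand n)) : f ∈ I := by
  simpa [expandCoeff_mul_expand he, expandCoeff_monomial_self] using
    expandCoeff_mem_of_mem_map_expand he hf

end ExpandCoeff

theorem g4_of_neg {r : ℤ} (hr : r < 0) : g4 r = 0 := by
  rw [g4, if_pos hr.le, if_neg hr.ne]

theorem g4_zero : g4 0 = 1 := by
  rw [g4, if_pos le_rfl, if_pos rfl]

theorem g4_of_pos {r : ℤ} (hr : 0 < r) :
    g4 r = X 0 * g4 (r - 2) + X 1 * g4 (r - 3) + X 2 * g4 (r - 4) := by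
  rw [g4, if_neg hr.not_ge]

/-- In terms of the generating function `G = ∑ g_r x ^ r = 1 / (1 + w₂ x² + w₃ x³ + w₄ x⁴)`, this is
`G = (1 + w₂ x² + w₃ x³ + w₄ x⁴) G²`, where `G² = ∑ g_r² x ^ (2 r)` in characteristic two. -/
theorem g4_two_mul_and_g4_two_mul_add_one (r : ℤ) :
    g4 (2 * r) = g4 r ^ 2 + X 0 * g4 (r - 1) ^ 2 + X 2 * g4 (r - 2) ^ 2 ∧
      g4 (2 * r + 1) = X 1 * g4 (r - 1) ^ 2 := by
  obtain hr | rfl | hr := lt_trichotomy r 0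
  · simp [g4_of_neg, show 2 * r < 0 by omega, show 2 * r + 1 < 0 by omega, hr,
      show r - 1 < 0 by omega, show r - 2 < 0 by omega]
  · simp [g4_zero, g4_of_neg, g4_of_pos one_pos]
  · obtain ⟨even₁, odd₁⟩ := g4_two_mul_and_g4_two_mul_add_one (r - 1)
    obtain ⟨even₂, odd₂⟩ := g4_two_mul_and_g4_two_mul_add_one (r - 2)
    simp only [sub_sub, Int.reduceAdd] at even₁ odd₁ even₂ odd₂
    have rec_even : g4 (2 * r) =
        X 0 * g4 (2 * (r - 1)) + X 1 * g4 (2 * (r - 2) + 1) + X 2 * g4 (2 * (r - 2)) := by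
      rw [g4_of_pos (by omega)]
      ring_nf
    have rec_odd : g4 (2 * r + 1) =
        X 0 * g4 (2 * (r - 1) + 1) + X 1 * g4 (2 * (r - 1)) + X 2 * g4 (2 * (r - 2) + 1) := by
      rw [g4_of_pos (by omega)]
      ring_nf
    have rec_sq : g4 r ^ 2 =
        X 0 ^ 2 * g4 (r - 2) ^ 2 + X 1 ^ 2 * g4 (r - 3) ^ 2 + X 2 ^ 2 * g4 (r - 4) ^ 2 := by
      rw [g4_of_pos hr, CharTwo.add_sq, CharTwo.add_sq, mul_pow, mul_pow, mul_pow]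
    have two_eq_zero : (2 : MvPolynomial (Fin 3) (ZMod 2)) = 0 := CharTwo.two_eq_zero
    constructor
    · linear_combination rec_even + X 0 * even₁ + X 1 * odd₂ + X 2 * even₂ - rec_sq
        + X 0 * X 2 * g4 (r - 3) ^ 2 * two_eq_zero
    · linear_combination rec_odd + X 0 * odd₁ + X 1 * even₁ + X 2 * odd₂
        + (X 0 * X 1 * g4 (r - 2) ^ 2 + X 1 * X 2 * g4 (r - 3) ^ 2) * two_eq_zero
termination_by r.toNat

theorem g4_two_mul (r : ℤ) :
    g4 (2 * r) = g4 r ^ 2 + X 0 * g4 (r - 1) ^ 2 + X 2 * g4 (r - 2) ^ 2 :=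
  (g4_two_mul_and_g4_two_mul_add_one r).1

theorem g4_two_mul_add_one (r : ℤ) : g4 (2 * r + 1) = X 1 * g4 (r - 1) ^ 2 :=
  (g4_two_mul_and_g4_two_mul_add_one r).2

theorem g4_two_pow_sub_three (n : ℕ) : g4 (2 ^ n - 3) = 0 := by
  induction n with
  | zero => exact g4_of_neg (by norm_num)
  | succ n ih =>
    rw [show (2 : ℤ) ^ (n + 1) - 3 = 2 * (2 ^ n - 2) + 1 by ring, g4_two_mul_add_one,
      show (2 : ℤ) ^ n - 2 - 1 = 2 ^ n - 3 by ring, ih, zero_pow two_ne_zero, mul_zero]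

theorem g4_two_pow_succ_sub_four (n : ℕ) :
    g4 (2 ^ (n + 1) - 4) = g4 (2 ^ n - 2) ^ 2 + X 2 * g4 (2 ^ n - 4) ^ 2 := by
  rw [show (2 : ℤ) ^ (n + 1) - 4 = 2 * (2 ^ n - 2) by ring, g4_two_mul,
    show (2 : ℤ) ^ n - 2 - 1 = 2 ^ n - 3 by ring, show (2 : ℤ) ^ n - 2 - 2 = 2 ^ n - 4 by ring,
    g4_two_pow_sub_three, zero_pow two_ne_zero, mul_zero, add_zero]

theorem g4_two_pow_succ_sub_two (n : ℕ) :
    g4 (2 ^ (n + 1) - 2) = g4 (2 ^ n - 1) ^ 2 + X 0 * g4 (2 ^ n - 2) ^ 2 := by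
  rw [show (2 : ℤ) ^ (n + 1) - 2 = 2 * (2 ^ n - 1) by ring, g4_two_mul,
    show (2 : ℤ) ^ n - 1 - 1 = 2 ^ n - 2 by ring, show (2 : ℤ) ^ n - 1 - 2 = 2 ^ n - 3 by ring,
    g4_two_pow_sub_three, zero_pow two_ne_zero, mul_zero, add_zero]

theorem g4_two_pow_succ_sub_one (n : ℕ) :
    g4 (2 ^ (n + 1) - 1) = X 1 * g4 (2 ^ n - 2) ^ 2 := by
  rw [show (2 : ℤ) ^ (n + 1) - 1 = 2 * (2 ^ n - 1) + 1 by ring, g4_two_mul_add_one,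
    show (2 : ℤ) ^ n - 1 - 1 = 2 ^ n - 2 by ring]

theorem g4_mem_I4 {n r : ℤ} (hn : 0 ≤ n) (hr : n - 3 ≤ r) : g4 r ∈ I4 n := by
  obtain hrn | hrn := le_or_gt r n
  · obtain rfl | rfl | rfl | rfl : r = n - 3 ∨ r = n - 2 ∨ r = n - 1 ∨ r = n := by omega
    all_goals exact subset_span (by simp)
  · rw [g4_of_pos (hn.trans_lt hrn)]
    exact add_mem (add_mem (mul_mem_left _ _ (g4_mem_I4 hn (by omega)))
      (mul_mem_left _ _ (g4_mem_I4 hn (by omega)))) (mul_mem_left _ _ (g4_mem_I4 hn (by omega)))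
termination_by r.toNat

theorem g4_two_pow_sub_mem_I4 {n m : ℕ} (hnm : n ≤ m) {k : ℤ} (hk : k ≤ 4) :
    g4 (2 ^ m - k) ∈ I4 (2 ^ n - 1) := by
  have h1 : (1 : ℤ) ≤ 2 ^ n := one_le_pow₀ one_le_two
  have h2 : (2 : ℤ) ^ n ≤ 2 ^ m := pow_le_pow_right₀ one_le_two hnm
  exact g4_mem_I4 (by omega) (by omega)

theorem I4_two_pow_sub_one (n : ℕ) :
    I4 (2 ^ n - 1) = span {g4 (2 ^ n - 4), g4 (2 ^ n - 2), g4 (2 ^ n - 1)} := by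
  rw [I4, show (2 : ℤ) ^ n - 1 - 3 = 2 ^ n - 4 by ring,
    show (2 : ℤ) ^ n - 1 - 2 = 2 ^ n - 3 by ring, show (2 : ℤ) ^ n - 1 - 1 = 2 ^ n - 2 by ring,
    g4_two_pow_sub_three, Set.insert_comm, span_insert_zero]

theorem I4_two_pow_succ_sub_one (n : ℕ) :
    I4 (2 ^ (n + 1) - 1) = span {g4 (2 ^ n - 2) ^ 2 + X 2 * g4 (2 ^ n - 4) ^ 2,
      g4 (2 ^ n - 1) ^ 2 + X 0 * g4 (2 ^ n - 2) ^ 2, X 1 * g4 (2 ^ n - 2) ^ 2} := by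
  rw [I4_two_pow_sub_one, g4_two_pow_succ_sub_four, g4_two_pow_succ_sub_two,
    g4_two_pow_succ_sub_one]

theorem map_expand_I4_two_pow_sub_one (n : ℕ) : (I4 (2 ^ n - 1)).map (expand 2) =
    span {g4 (2 ^ n - 4) ^ 2, g4 (2 ^ n - 2) ^ 2, g4 (2 ^ n - 1) ^ 2} := by
  simp only [I4_two_pow_sub_one, map_span, Set.image_insert_eq, Set.image_singleton, expand_zmod]

theorem X_one_mul_X_two_mul_sq_mem_I4 {n : ℕ} {f : MvPolynomial (Fin 3) (ZMod 2)}
    (hf : f ∈ I4 (2 ^ n - 1)) : X 1 * X 2 * f ^ 2 ∈ I4 (2 ^ (n + 1) - 1) := by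
  rw [I4_two_pow_succ_sub_one]
  refine mul_mul_mem_span_of_mem_span ?_
  rw [← map_expand_I4_two_pow_sub_one, ← expand_zmod]
  exact mem_map_of_mem _ hf

theorem two_pow_succ_sub_one (n : ℕ) : 2 ^ (n + 1) - 1 = 2 * (2 ^ n - 1) + 1 := by
  have := Nat.one_le_two_pow (n := n)
  omega

theorem exists_mem_I4_X_two_pow_two_pow_sub_one_eq (n : ℕ) : ∃ z ∈ I4 (2 ^ (n + 1) - 1),
    X 2 ^ (2 ^ n - 1) =
      X 0 * g4 (2 ^ (n + 1) - 4) * g4 (2 ^ (n + 1) - 2) + g4 (2 ^ (n + 2) - 4) + X 1 * z := by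
  induction n with
  | zero => exact ⟨0, zero_mem _, by simp [g4_of_neg, g4_zero]⟩
  | succ n ih =>
    obtain ⟨z, hz, h⟩ := ih
    refine ⟨X 1 * X 2 * z ^ 2
        + g4 (2 ^ n - 2) ^ 2 * g4 (2 ^ (n + 1) - 1) * X 0 * g4 (2 ^ (n + 2) - 4)
        + g4 (2 ^ n - 2) ^ 2 * g4 (2 ^ (n + 1) - 1) * g4 (2 ^ (n + 2) - 2)
        + X 0 * g4 (2 ^ n - 2) ^ 4 * g4 (2 ^ (n + 2) - 1), ?_, ?_⟩
    · refine add_mem (add_mem (add_mem (X_one_mul_X_two_mul_sq_mem_I4 hz) ?_) ?_) ?_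
      all_goals exact mul_mem_left _ _ (g4_two_pow_sub_mem_I4 le_rfl (by norm_num))
    · rw [two_pow_succ_sub_one, pow_succ, pow_mul', h]
      simp only [CharTwo.add_sq, mul_pow]
      have hc := g4_two_pow_succ_sub_one n
      have ha := g4_two_pow_succ_sub_four (n + 1)
      have hb := g4_two_pow_succ_sub_two (n + 1)
      have hc' := g4_two_pow_succ_sub_one (n + 1)
      have ha' := g4_two_pow_succ_sub_four (n + 2)
      grind

theorem X_two_pow_two_pow_sub_one_mem_I4 (n : ℕ) : X 2 ^ (2 ^ n - 1) ∈ I4 (2 ^ (n + 1) - 1) := by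
  obtain ⟨z, hz, h⟩ := exists_mem_I4_X_two_pow_two_pow_sub_one_eq n
  rw [h]
  exact add_mem (add_mem (mul_mem_left _ _ (g4_two_pow_sub_mem_I4 le_rfl (by norm_num)))
    (g4_two_pow_sub_mem_I4 (by omega) (by norm_num))) (mul_mem_left _ _ hz)

theorem killVar_one_g4_two_pow_succ_sub_one (n : ℕ) : killVar 1 (g4 (2 ^ (n + 1) - 1)) = 0 := by
  rw [g4_two_pow_succ_sub_one, map_mul, killVar_X_self, zero_mul]

theorem killVar_one_g4_two_pow_succ_sub_two (n : ℕ) :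
    killVar 1 (g4 (2 ^ (n + 1) - 2)) = X 0 ^ (2 ^ n - 1) := by
  induction n with
  | zero => simp [g4_zero]
  | succ n ih =>
    rw [g4_two_pow_succ_sub_two, map_add, map_mul, map_pow, map_pow, ih,
      killVar_one_g4_two_pow_succ_sub_one, killVar_X_of_ne (by decide), two_pow_succ_sub_one]
    ring

theorem killVar_one_g4_two_pow_succ_sub_four (n : ℕ) :
    killVar 1 (g4 (2 ^ (n + 1) - 4)) =
      killVar 1 (g4 (2 ^ n - 2)) ^ 2 + X 2 * killVar 1 (g4 (2 ^ n - 4)) ^ 2 := by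
  rw [g4_two_pow_succ_sub_four, map_add, map_mul, map_pow, map_pow, killVar_X_of_ne (by decide)]

theorem killVar_two_g4_two_pow_sub_two_and_sub_one (n : ℕ) :
    killVar 2 (g4 (2 ^ n - 2)) = g4 (2 ^ n - 2) ∧
      killVar 2 (g4 (2 ^ n - 1)) = g4 (2 ^ n - 1) := by
  induction n with
  | zero => simp [g4_zero, g4_of_neg]
  | succ n ih =>
    simp [g4_two_pow_succ_sub_two, g4_two_pow_succ_sub_one, ih, killVar_X_of_ne]

theorem isRelPrime_killVar_one_g4_sub_four_sub_two (n : ℕ) :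
    IsRelPrime (killVar 1 (g4 (2 ^ (n + 1) - 4))) (killVar 1 (g4 (2 ^ (n + 1) - 2))) := by
  intro d hda hdb
  have hd₀ : d ∣ X 0 ^ (2 ^ n - 1) := killVar_one_g4_two_pow_succ_sub_two n ▸ hdb
  have hd₂ : d ∣ X 2 ^ (2 ^ n - 1) := by
    obtain ⟨z, -, h⟩ := exists_mem_I4_X_two_pow_two_pow_sub_one_eq n
    have h₁ := congrArg (killVar 1) h
    simp only [map_add, map_mul, map_pow, killVar_X_self, killVar_X_of_ne, ne_eq, Fin.reduceEq,
      not_false_eq_true, killVar_one_g4_two_pow_succ_sub_four (n + 1), zero_mul, add_zero] at h₁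
    rw [h₁]
    exact dvd_add (hdb.mul_left _) (dvd_add (dvd_pow hdb two_ne_zero)
      ((dvd_pow hda two_ne_zero).mul_left _))
  exact (isRelPrime_X_X (by decide)).pow hd₀ hd₂

theorem not_X_one_dvd_g4_two_pow_succ_sub_two (n : ℕ) : ¬ X 1 ∣ g4 (2 ^ (n + 1) - 2) := fun h ↦ by
  have h0 := map_dvd (killVar 1) h
  rw [killVar_X_self, killVar_one_g4_two_pow_succ_sub_two, zero_dvd_iff] at h0
  exact pow_ne_zero _ (X_ne_zero 0) h0

theorem isRelPrime_g4_two_pow_sub_two_sub_one (n : ℕ) :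
    IsRelPrime (g4 (2 ^ n - 2)) (g4 (2 ^ n - 1)) := by
  induction n with
  | zero => simpa [g4_zero] using isRelPrime_one_right
  | succ n ih =>
    have hX : IsRelPrime (X 1) (g4 (2 ^ (n + 1) - 2)) :=
      X_prime.irreducible.isRelPrime_iff_not_dvd.2 (not_X_one_dvd_g4_two_pow_succ_sub_two n)
    rw [g4_two_pow_succ_sub_one]
    refine hX.symm.mul_right ?_
    rw [g4_two_pow_succ_sub_two]
    exact ih.symm.pow.add_mul_right_left _

theorem mem_map_expand_I4_of_X_one_mul_X_two_mul_mem {n : ℕ} {f : MvPolynomial (Fin 3) (ZMod 2)}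
    (hf : X 1 * X 2 * f ∈ I4 (2 ^ (n + 1) - 1)) : f ∈ (I4 (2 ^ n - 1)).map (expand 2) := by
  rw [I4_two_pow_succ_sub_one] at hf
  rw [map_expand_I4_two_pow_sub_one]
  refine mem_span_of_mul_mul_mem_span ?_ ?_ hf
  · rw [← g4_two_pow_succ_sub_four, ← g4_two_pow_succ_sub_two]
    exact isSMulRegular_X_quotient_span_pair (isRelPrime_killVar_one_g4_sub_four_sub_two n)
  · obtain ⟨hb, hc⟩ := killVar_two_g4_two_pow_sub_two_and_sub_one n
    refine isSMulRegular_X_quotient_span_pair ?_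
    rw [map_pow, map_pow, hb, hc]
    exact (isRelPrime_g4_two_pow_sub_two_sub_one n).pow

theorem mem_I4_of_mul_sq_mem_I4 {n : ℕ} {f : MvPolynomial (Fin 3) (ZMod 2)}
    (hf : X 0 * X 1 ^ 2 * X 2 ^ 2 * f ^ 2 ∈ I4 (2 ^ (n + 1) - 1)) : f ∈ I4 (2 ^ n - 1) := by
  have hmon : (monomial (Finsupp.equivFunOnFinite.symm 1) 1 : MvPolynomial (Fin 3) (ZMod 2)) =
      X 0 * X 1 * X 2 := by
    simp [monomial_eq, Finsupp.prod_fintype, Fin.prod_univ_three]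
  refine mem_of_monomial_mul_expand_mem_map_expand (n := 2)
    (e := Finsupp.equivFunOnFinite.symm 1) (by simp)
    (mem_map_expand_I4_of_X_one_mul_X_two_mul_mem ?_)
  rw [hmon, expand_zmod]
  convert hf using 1
  ring

theorem I4_seven : I4 7 = span {X 0 ^ 2 + X 2, X 1 ^ 2 + X 0 ^ 3, X 1 * X 0 ^ 2} := by
  have g4_two : g4 2 = X 0 := by simp [g4_of_pos, g4_zero, g4_of_neg]
  have g4_three : g4 3 = X 1 := by simp [g4_of_pos, g4_zero, g4_of_neg]
  convert I4_two_pow_succ_sub_one 2 using 1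
  · norm_num
  · norm_num [g4_zero, g4_two, g4_three, ← pow_succ']

/-- Substitute `w_i ↦ T ^ i`: the first two generators vanish, the third becomes `T ^ 7` and
`w₄²` becomes `T ^ 8`, but no polynomial in `T²`, `T³`, `T⁴` is equal to `T`. -/
theorem X_two_sq_notMem_I4_seven : X 2 ^ 2 ∉ I4 7 := by
  rw [I4_seven]
  intro h
  obtain ⟨u, v, w, h⟩ := Submodule.mem_span_triple.1 h
  let φ := aeval (R := ZMod 2) fun i : Fin 3 ↦ (Polynomial.X : Polynomial (ZMod 2)) ^ (i.val + 2)
  have hφ (i : Fin 3) : φ (X i) = Polynomial.X ^ (i.val + 2) := aeval_X _ _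
  have two_eq_zero : (2 : Polynomial (ZMod 2)) = 0 := CharTwo.two_eq_zero
  have hmul : φ w * Polynomial.X ^ 7 = Polynomial.X * Polynomial.X ^ 7 := by
    have himage := congrArg φ h
    simp only [smul_eq_mul, map_add, map_mul, map_pow, hφ, Fin.val_zero, Fin.val_one,
      Fin.val_two] at himage
    linear_combination himage
      - (φ u * Polynomial.X ^ 4 + φ v * Polynomial.X ^ 6) * two_eq_zero
  have hw : φ w = Polynomial.X := mul_right_cancel₀ (pow_ne_zero 7 Polynomial.X_ne_zero) hmul
  have hcoeff : (φ w).coeff 1 = 0 :=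
    coeff_one_aeval_X_pow (d := fun i : Fin 3 ↦ i.val + 2) (fun i ↦ Nat.le_add_left 2 i) w
  simp [hw] at hcoeff

theorem pow_mul_X_two_pow_notMem_I4 (n : ℕ) :
    (X 0 * X 1 ^ 2) ^ (2 ^ n - 1) * X 2 ^ (2 ^ (n + 2) - 2) ∉ I4 (2 ^ (n + 3) - 1) := by
  induction n with
  | zero => simpa using X_two_sq_notMem_I4_seven
  | succ n ih =>
    refine fun h ↦ ih (mem_I4_of_mul_sq_mem_I4 ?_)
    have hexp : 2 ^ (n + 1 + 2) - 2 = 2 * (2 ^ (n + 2) - 2) + 2 := by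
      have := Nat.one_le_two_pow (n := n)
      rw [show 2 ^ (n + 1 + 2) = 8 * 2 ^ n by ring, show 2 ^ (n + 2) = 4 * 2 ^ n by ring]
      omega
    convert h using 1
    rw [two_pow_succ_sub_one, hexp]
    ring

/-- Proposition 3.6: for every `t ≥ 4`, `w_4^{2^{t-1}-1} ∈ I_{2^t-1,4}` and
`w_4^{2^{t-1}-2} ∉ I_{2^t-1,4}`, i.e. the image of `w_4` in
`F_2[w_2,w_3,w_4]/I_{2^t-1,4}` has height exactly `2^{t-1} - 2`. -/
theorem stmt9 (t : ℕ) (ht : 4 ≤ t) :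
    (X 2 : MvPolynomial (Fin 3) (ZMod 2)) ^ (2 ^ (t - 1) - 1) ∈ I4 (2 ^ t - 1) ∧
      (X 2 : MvPolynomial (Fin 3) (ZMod 2)) ^ (2 ^ (t - 1) - 2) ∉ I4 (2 ^ t - 1) := by
  obtain ⟨n, rfl⟩ : ∃ n, t = n + 3 := ⟨t - 3, by omega⟩
  exact ⟨X_two_pow_two_pow_sub_one_mem_I4 (n + 2),
    fun h ↦ pow_mul_X_two_pow_notMem_I4 n (mul_mem_left _ _ h)⟩
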